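/- Diagonal-formula elimination: if the nested sequent Γ{[◇A⊥, A]} is cut-free provable in the nested sequent calculus for GL, then Γ{[A]} is provable using cuts only on the formula A. -/

import Mathlib

/-- Formulas of GL in negation normal form. -/
inductive Formula : Type where
  | pos : ℕ → Formula
  | neg : ℕ → Formula
  | and : Formula → Formula → Formula
  | or  : Formula → Formula → Formula
  | box : Formula → Formula
  | dia : Formula → Formula
deriving DecidableEq

/-- Negation `A⊥` of a formula, via De Morgan duality. -/
def Formula.negate : Formula → Formula
  | .pos a => .neg a
  | .neg a => .pos a
  | .and A B => .or A.negate B.negate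
  | .or A B => .and A.negate B.negate
  | .box A => .dia A.negate
  | .dia A => .box A.negate

/-- An element of a nested sequent: a formula or a nested (bracketed) sequent. -/
inductive SeqElem : Type where
  | fml : Formula → SeqElem
  | nest : List SeqElem → SeqElem

/-- A nested sequent. -/
abbrev Sequent := List SeqElem

/-- Unary contexts: a nested sequent with a single hole. -/
inductive Ctx : Type where
  | hole : Sequent → Ctx
  | nest : Sequent → Ctx → Ctx

/-- Fill the hole of a context with a sequent. -/
def Ctx.fill : Ctx → Sequent → Sequent
  | .hole Δ, Γ => Δ ++ Γ
  | .nest Δ c, Γ => .nest (c.fill Γ) :: Δ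

/-- Depth of a context: number of brackets surrounding the hole. -/
def Ctx.depth : Ctx → ℕ
  | .hole _ => 0
  | .nest _ c => c.depth + 1

/-- Equivalence of nested sequents up to (deep) exchange. -/
inductive SeqEquiv : Sequent → Sequent → Prop where
  | nil : SeqEquiv [] []
  | cons {e : SeqElem} {Γ Δ : Sequent} : SeqEquiv Γ Δ → SeqEquiv (e :: Γ) (e :: Δ)
  | consNest {Γ' Δ' Γ Δ : Sequent} :
      SeqEquiv Γ' Δ' → SeqEquiv Γ Δ → SeqEquiv (.nest Γ' :: Γ) (.nest Δ' :: Δ)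
  | swap (a b : SeqElem) (Γ : Sequent) : SeqEquiv (a :: b :: Γ) (b :: a :: Γ)
  | trans {Γ Δ Θ : Sequent} : SeqEquiv Γ Δ → SeqEquiv Δ Θ → SeqEquiv Γ Θ

/-- `DerivH n Γ`: `Γ` has a cut-free derivation of height at most `n`. -/
inductive DerivH : ℕ → Sequent → Prop where
  | id (n : ℕ) (c : Ctx) (a : ℕ) :
      DerivH n (c.fill [.fml (.pos a), .fml (.neg a)])
  | and {n : ℕ} {c : Ctx} {A B : Formula} :
      DerivH n (c.fill [.fml A]) → DerivH n (c.fill [.fml B]) →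
      DerivH (n + 1) (c.fill [.fml (.and A B)])
  | or {n : ℕ} {c : Ctx} {A B : Formula} :
      DerivH n (c.fill [.fml A, .fml B]) →
      DerivH (n + 1) (c.fill [.fml (.or A B)])
  | box {n : ℕ} {c : Ctx} {A : Formula} :
      DerivH n (c.fill [.nest [.fml (.dia A.negate), .fml A]]) →
      DerivH (n + 1) (c.fill [.fml (.box A)])
  | dia {n : ℕ} (c d : Ctx) {A : Formula} :
      0 < d.depth →
      DerivH n (c.fill (d.fill [.fml A] ++ [.fml (.dia A)])) →
      DerivH (n + 1) (c.fill (d.fill [] ++ [.fml (.dia A)]))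
  | exch {n : ℕ} {Γ Δ : Sequent} : SeqEquiv Γ Δ → DerivH n Γ → DerivH n Δ
  | up {n : ℕ} {Γ : Sequent} : DerivH n Γ → DerivH (n + 1) Γ

/-- Derivability where cut is permitted on formulas satisfying `P`. -/
inductive DerivWith (P : Formula → Prop) : Sequent → Prop where
  | id (c : Ctx) (a : ℕ) :
      DerivWith P (c.fill [.fml (.pos a), .fml (.neg a)])
  | and {c : Ctx} {A B : Formula} :
      DerivWith P (c.fill [.fml A]) → DerivWith P (c.fill [.fml B]) →
      DerivWith P (c.fill [.fml (.and A B)])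
  | or {c : Ctx} {A B : Formula} :
      DerivWith P (c.fill [.fml A, .fml B]) →
      DerivWith P (c.fill [.fml (.or A B)])
  | box {c : Ctx} {A : Formula} :
      DerivWith P (c.fill [.nest [.fml (.dia A.negate), .fml A]]) →
      DerivWith P (c.fill [.fml (.box A)])
  | dia (c d : Ctx) {A : Formula} :
      0 < d.depth →
      DerivWith P (c.fill (d.fill [.fml A] ++ [.fml (.dia A)])) →
      DerivWith P (c.fill (d.fill [] ++ [.fml (.dia A)]))
  | cut {c : Ctx} {A : Formula} : P A →
      DerivWith P (c.fill [.fml A]) → DerivWith P (c.fill [.fml A.negate]) →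
      DerivWith P (c.fill [])
  | exch {Γ Δ : Sequent} : SeqEquiv Γ Δ → DerivWith P Γ → DerivWith P Δ

/-- Cut-free derivability. -/
abbrev Deriv : Sequent → Prop := DerivWith (fun _ => False)

/-!
The calculus is sound, even with cuts, for transitive converse well-founded Kripke models, and it
is complete for them without cut. In such a model, if `□A` fails at a point, then `A` fails at some
successor all of whose own successors satisfy `A`; there `◇A⊥` fails as well. Hence a countermodel
of `Γ{[A]}` is also a countermodel of `Γ{[◇A⊥, A]}`.

For completeness, an underivable sequent is turned into a tree from the root downwards: at a node,
all bodies of diamonds above it are added, conjunctions and disjunctions are decomposed, and the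
brackets and boxes then give the children. A box `□B` gives a child with the new diamond `◇B⊥`,
unless that diamond is already in force, in which case the child is derivable by identity. This
terminates: every other child is a bracket of its parent, and only finitely many formulas are
involved.
-/

/-! ### Formulas -/

namespace Formula

theorem negate_negate (A : Formula) : A.negate.negate = A := by
  induction A <;> simp_all [negate]

/-- The subformulas of a formula; literals count as having no proper subformula. -/
def subformulas : Formula → Finset Formula
  | .pos a => {.pos a}
  | .neg a => {.neg a}
  | .and A B => insert (.and A B) (A.subformulas ∪ B.subformulas)
  | .or A B => insert (.or A B) (A.subformulas ∪ B.subformulas)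
  | .box A => insert (.box A) A.subformulas
  | .dia A => insert (.dia A) A.subformulas

theorem self_mem_subformulas (A : Formula) : A ∈ A.subformulas := by
  cases A <;> simp [subformulas]

theorem subformulas_subset {A B : Formula} (h : B ∈ A.subformulas) :
    B.subformulas ⊆ A.subformulas := by
  induction A <;> grind [subformulas]

theorem negate_mem_subformulas_negate {A B : Formula} (h : B ∈ A.subformulas) :
    B.negate ∈ A.negate.subformulas := by
  induction A <;> grind [subformulas, negate]

end Formula

/-- Closure of a finite set of formulas under subformulas and negation: the formulas that can
occur in a proof search belong to such a set. -/
structure SubformulaClosed (S : Finset Formula) : Prop where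
  subformulas_subset {A : Formula} : A ∈ S → A.subformulas ⊆ S
  negate_mem {A : Formula} : A ∈ S → A.negate ∈ S

namespace SubformulaClosed

variable {S : Finset Formula} {A : Formula}

theorem mem_of_box_mem (hS : SubformulaClosed S) (h : .box A ∈ S) : A ∈ S :=
  hS.subformulas_subset h (Finset.mem_insert_of_mem A.self_mem_subformulas)

theorem mem_of_dia_mem (hS : SubformulaClosed S) (h : .dia A ∈ S) : A ∈ S :=
  hS.subformulas_subset h (Finset.mem_insert_of_mem A.self_mem_subformulas)

end SubformulaClosed

/-- The least set containing `T` that is closed under subformulas and negation. -/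
def subformulaClosure (T : Finset Formula) : Finset Formula :=
  T.biUnion fun A => A.subformulas ∪ A.negate.subformulas

theorem subset_subformulaClosure (T : Finset Formula) : T ⊆ subformulaClosure T := fun A hA =>
  Finset.mem_biUnion.2 ⟨A, hA, Finset.mem_union_left _ A.self_mem_subformulas⟩

theorem subformulaClosed_subformulaClosure (T : Finset Formula) :
    SubformulaClosed (subformulaClosure T) where
  subformulas_subset {B} hB := by
    obtain ⟨A, hA, hBA⟩ := Finset.mem_biUnion.1 hB
    refine subset_trans ?_ (Finset.subset_biUnion_of_mem _ hA)
    obtain hBA | hBA := Finset.mem_union.1 hBA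
    · exact (Formula.subformulas_subset hBA).trans Finset.subset_union_left
    · exact (Formula.subformulas_subset hBA).trans Finset.subset_union_right
  negate_mem {B} hB := by
    obtain ⟨A, hA, hBA⟩ := Finset.mem_biUnion.1 hB
    refine Finset.mem_biUnion.2 ⟨A, hA, ?_⟩
    obtain hBA | hBA := Finset.mem_union.1 hBA
    · exact Finset.mem_union_right _ (Formula.negate_mem_subformulas_negate hBA)
    · refine Finset.mem_union_left _ ?_
      simpa only [A.negate_negate] using Formula.negate_mem_subformulas_negate hBA

/-! ### Tree models -/

/-- Well-founded Kripke trees, given by the valuation at the root and the family of subtrees at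
its children. -/
inductive KripkeTree : Type 1 where
  | node (v : ℕ → Prop) {ι : Type} (f : ι → KripkeTree) : KripkeTree

namespace KripkeTree

/-- The valuation at the root. -/
def val : KripkeTree → ℕ → Prop
  | .node v _ => v

/-- `IsChild s t`: the root of `s` is an immediate successor of the root of `t`. -/
inductive IsChild : KripkeTree → KripkeTree → Prop where
  | mk (v : ℕ → Prop) {ι : Type} (f : ι → KripkeTree) (i : ι) : IsChild (f i) (.node v f)

/-- `Below s t`: the root of `s` is accessible from that of `t`. Points of a tree are represented
by the subtrees they generate. -/
abbrev Below : KripkeTree → KripkeTree → Prop :=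
  Relation.TransGen IsChild

theorem wellFounded_below : WellFounded Below := by
  refine WellFounded.transGen ⟨fun t => ?_⟩
  induction t with
  | node v f ih => exact ⟨_, fun s hs => by cases hs with | mk _ _ i => exact ih i⟩

/-- Truth of a formula at the root of a tree. -/
def Forces : KripkeTree → Formula → Prop
  | t, .pos a => t.val a
  | t, .neg a => ¬ t.val a
  | t, .and A B => t.Forces A ∧ t.Forces B
  | t, .or A B => t.Forces A ∨ t.Forces B
  | t, .box A => ∀ s, Below s t → s.Forces A
  | t, .dia A => ∃ s, Below s t ∧ s.Forces A

theorem forces_negate {A : Formula} {t : KripkeTree} : t.Forces A.negate ↔ ¬ t.Forces A := by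
  induction A generalizing t <;> simp_all [Formula.negate, Forces, imp_iff_not_or]

theorem forces_dia_node {v : ℕ → Prop} {ι : Type} {f : ι → KripkeTree} {A : Formula} :
    (node v f).Forces (.dia A) ↔ ∃ i, (f i).Forces A ∨ (f i).Forces (.dia A) := by
  constructor
  · rintro ⟨s, hs, hA⟩
    obtain ⟨r, hsr, ⟨⟩⟩ := Relation.TransGen.tail'_iff.1 hs
    obtain rfl | hsr := Relation.reflTransGen_iff_eq_or_transGen.1 hsr
    · exact ⟨_, .inl hA⟩
    · exact ⟨_, .inr ⟨s, hsr, hA⟩⟩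
  · rintro ⟨i, hA | ⟨s, hs, hA⟩⟩
    · exact ⟨f i, .single (.mk v f i), hA⟩
    · exact ⟨s, hs.tail (.mk v f i), hA⟩

theorem exists_below_not_forces_dia_negate {A : Formula} {s t : KripkeTree} (hst : Below s t)
    (hs : ¬ s.Forces A) : ∃ r, Below r t ∧ ¬ r.Forces (.dia A.negate) ∧ ¬ r.Forces A := by
  obtain ⟨r, ⟨hrt, hr⟩, hmin⟩ :=
    wellFounded_below.has_min {r | Below r t ∧ ¬ r.Forces A} ⟨s, hst, hs⟩
  refine ⟨r, hrt, ?_, hr⟩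
  rintro ⟨q, hqr, hq⟩
  exact hmin q ⟨hqr.trans hrt, forces_negate.1 hq⟩ hqr

mutual

/-- The formula interpretation of a sequent element is false at the root of the tree; a bracket
is interpreted as a box. -/
def RefutesElem : KripkeTree → SeqElem → Prop
  | t, .fml A => ¬ t.Forces A
  | t, .nest Γ => ∃ s, Below s t ∧ s.Refutes Γ

/-- The formula interpretation of a sequent is false at the root of the tree; a sequent is
interpreted as a disjunction. -/
def Refutes : KripkeTree → List SeqElem → Prop
  | _, [] => True
  | t, e :: Γ => t.RefutesElem e ∧ t.Refutes Γ

end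

theorem refutes_iff_forall_mem {t : KripkeTree} {Γ : Sequent} :
    t.Refutes Γ ↔ ∀ e ∈ Γ, t.RefutesElem e := by
  induction Γ <;> simp_all [Refutes]

theorem refutes_append {t : KripkeTree} {Γ Δ : Sequent} :
    t.Refutes (Γ ++ Δ) ↔ t.Refutes Γ ∧ t.Refutes Δ := by
  simp only [refutes_iff_forall_mem, List.forall_mem_append]

theorem refutes_congr {Γ Δ : Sequent} (h : SeqEquiv Γ Δ) (t : KripkeTree) :
    t.Refutes Γ ↔ t.Refutes Δ := by
  induction h generalizing t with
  | nil => rfl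
  | cons _ ih => simp only [Refutes, ih]
  | consNest _ _ ih₁ ih₂ => simp only [Refutes, RefutesElem, ih₁, ih₂]
  | swap a b Γ => simp only [Refutes, and_left_comm]
  | trans _ _ ih₁ ih₂ => exact (ih₁ t).trans (ih₂ t)

/-- `RefutesAround c t s`: the part of `c` outside the hole is refuted at the root of `t`, with
the hole located at the root of `s`. -/
def RefutesAround : Ctx → KripkeTree → KripkeTree → Prop
  | .hole Δ, t, s => s = t ∧ t.Refutes Δ
  | .nest Δ c, t, s => (∃ r, Below r t ∧ RefutesAround c r s) ∧ t.Refutes Δ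

theorem refutes_fill {c : Ctx} {Γ : Sequent} {t : KripkeTree} :
    t.Refutes (c.fill Γ) ↔ ∃ s, RefutesAround c t s ∧ s.Refutes Γ := by
  induction c generalizing t with
  | hole Δ => simp [Ctx.fill, RefutesAround, refutes_append]
  | nest Δ c ih =>
    simp only [Ctx.fill, RefutesAround, Refutes, RefutesElem, ih]
    grind

theorem RefutesAround.below {c : Ctx} {t s : KripkeTree} (h : RefutesAround c t s)
    (hc : 0 < c.depth) : Below s t := by
  induction c generalizing t with
  | hole Δ => exact absurd hc (lt_irrefl 0)
  | nest Δ c ih =>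
    obtain ⟨⟨r, hrt, hr⟩, -⟩ := h
    cases c with
    | hole Θ => exact hr.1 ▸ hrt
    | nest Θ c => exact (ih hr (Nat.succ_pos _)).trans hrt

theorem Refutes.fill_mono {Γ Δ : Sequent} (h : ∀ s : KripkeTree, s.Refutes Γ → s.Refutes Δ)
    {c : Ctx} {t : KripkeTree} (ht : t.Refutes (c.fill Γ)) : t.Refutes (c.fill Δ) := by
  obtain ⟨s, hs, hΓ⟩ := refutes_fill.1 ht
  exact refutes_fill.2 ⟨s, hs, h s hΓ⟩

theorem Refutes.fill_or {Γ Δ₁ Δ₂ : Sequent}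
    (h : ∀ s : KripkeTree, s.Refutes Γ → s.Refutes Δ₁ ∨ s.Refutes Δ₂) {c : Ctx} {t : KripkeTree}
    (ht : t.Refutes (c.fill Γ)) : t.Refutes (c.fill Δ₁) ∨ t.Refutes (c.fill Δ₂) := by
  obtain ⟨s, hs, hΓ⟩ := refutes_fill.1 ht
  exact (h s hΓ).imp (fun hΔ => refutes_fill.2 ⟨s, hs, hΔ⟩) fun hΔ => refutes_fill.2 ⟨s, hs, hΔ⟩

theorem refutes_nest_dia_negate {A : Formula} {t : KripkeTree} (h : t.Refutes [.nest [.fml A]]) :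
    t.Refutes [.nest [.fml (.dia A.negate), .fml A]] := by
  simp only [Refutes, RefutesElem, and_true] at h ⊢
  obtain ⟨s, hst, hs⟩ := h
  exact exists_below_not_forces_dia_negate hst hs

theorem refutes_fill_append_dia {d : Ctx} (hd : 0 < d.depth) {A : Formula} {t : KripkeTree}
    (h : t.Refutes (d.fill [] ++ [.fml (.dia A)])) :
    t.Refutes (d.fill [.fml A] ++ [.fml (.dia A)]) := by
  obtain ⟨hfill, hdia⟩ := refutes_append.1 h
  obtain ⟨s, hs, -⟩ := refutes_fill.1 hfill
  have hA : ¬ s.Forces A := fun hA => hdia.1 ⟨s, hs.below hd, hA⟩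
  exact refutes_append.2 ⟨refutes_fill.2 ⟨s, hs, hA, trivial⟩, hdia⟩

end KripkeTree

/-! ### Soundness -/

open KripkeTree in
theorem DerivWith.not_refutes {P : Formula → Prop} {Γ : Sequent} (h : DerivWith P Γ)
    (t : KripkeTree) : ¬ t.Refutes Γ := by
  induction h generalizing t with
  | id c a =>
    intro ht
    obtain ⟨s, -, hpos, hneg, -⟩ := refutes_fill.1 ht
    exact hneg hpos
  | and _ _ ihA ihB =>
    refine fun ht => (Refutes.fill_or (fun s hs => ?_) ht).elim (ihA t) (ihB t)
    simpa only [Refutes, RefutesElem, Forces, and_true, not_and_or] using hs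
  | or _ ih =>
    refine fun ht => ih t (ht.fill_mono fun s hs => ?_)
    simpa only [Refutes, RefutesElem, Forces, and_true, not_or] using hs
  | box _ ih =>
    refine fun ht => ih t (ht.fill_mono fun s hs => refutes_nest_dia_negate ?_)
    simpa only [Refutes, RefutesElem, Forces, and_true, not_forall, exists_prop] using hs
  | dia c d hd _ ih => exact fun ht => ih t (ht.fill_mono fun s => refutes_fill_append_dia hd)
  | @cut c A _ _ _ ihA ihB =>
    refine fun ht => (Refutes.fill_or (fun s _ => ?_) ht).elim (ihA t) (ihB t)
    simpa only [Refutes, RefutesElem, and_true, forces_negate] using em (¬ s.Forces A)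
  | exch hequiv _ ih => exact fun ht => ih t ((refutes_congr hequiv t).2 ht)

/-! ### Zippers -/

/-- The position of a node in a nested sequent, given by the sequents lying beside the brackets
around it, innermost first. -/
abbrev Zipper : Type :=
  List Sequent

namespace Zipper

/-- The nested sequent with `Γ` at the given position. -/
def plug (p : Zipper) (Γ : Sequent) : Sequent :=
  p.foldl (fun Δ Θ => .nest Δ :: Θ) Γ

end Zipper

/-- The context `c` placed at the position `p`. -/
def Ctx.under (c : Ctx) (p : Zipper) : Ctx :=
  p.foldl (fun d Θ => .nest Θ d) c

theorem Ctx.fill_under (c : Ctx) (p : Zipper) (Γ : Sequent) :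
    (c.under p).fill Γ = p.plug (c.fill Γ) := by
  induction p generalizing c with
  | nil => rfl
  | cons Θ _ ih => exact ih (.nest Θ c)

namespace SeqEquiv

theorem refl : ∀ Γ : Sequent, SeqEquiv Γ Γ
  | [] => .nil
  | _ :: Γ => .cons (refl Γ)

theorem of_perm {Γ Δ : Sequent} (h : Γ.Perm Δ) : SeqEquiv Γ Δ := by
  induction h with
  | nil => exact .nil
  | cons _ _ ih => exact .cons ih
  | swap a b Γ => exact .swap b a Γ
  | trans _ _ ih₁ ih₂ => exact .trans ih₁ ih₂

theorem plug {Γ Δ : Sequent} (h : SeqEquiv Γ Δ) (p : Zipper) :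
    SeqEquiv (p.plug Γ) (p.plug Δ) := by
  induction p generalizing Γ Δ with
  | nil => exact h
  | cons Θ _ ih => exact ih (.consNest h (refl Θ))

end SeqEquiv

namespace Sequent

theorem exists_perm_cons {Γ : Sequent} {e : SeqElem} (h : e ∈ Γ) :
    ∃ Θ : Sequent, Γ.Perm (e :: Θ) := by
  obtain ⟨Γ₁, Γ₂, rfl⟩ := List.append_of_mem h
  exact ⟨Γ₁ ++ Γ₂, List.perm_middle⟩

/-- The bodies of the diamond formulas at the root of a sequent. -/
def diamonds (Γ : Sequent) : Finset Formula :=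
  (Γ.filterMap fun
    | .fml (.dia A) => some A
    | _ => none).toFinset

theorem mem_diamonds {Γ : Sequent} {A : Formula} : A ∈ diamonds Γ ↔ .fml (.dia A) ∈ Γ := by
  simp only [diamonds, List.mem_toFinset, List.mem_filterMap]
  refine ⟨?_, fun h => ⟨_, h, rfl⟩⟩
  rintro ⟨e, he, h⟩
  split at h <;> simp_all

end Sequent

/-- The bodies of the diamond formulas strictly above a position: those that the diamond rule can
bring there. -/
def Zipper.diamonds (p : Zipper) : Finset Formula :=
  p.foldr (fun Θ T => Sequent.diamonds Θ ∪ T) ∅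

theorem Zipper.diamonds_cons (Θ : Sequent) (p : Zipper) :
    Zipper.diamonds (Θ :: p) = Sequent.diamonds Θ ∪ p.diamonds :=
  rfl

theorem Zipper.exists_eq_append_of_mem_diamonds {p : Zipper} {A : Formula} (h : A ∈ p.diamonds) :
    ∃ (q r : Zipper) (Θ : Sequent), p = q ++ Θ :: r ∧ .fml (.dia A) ∈ Θ := by
  induction p with
  | nil => simp [diamonds] at h
  | cons Θ p ih =>
    rw [diamonds_cons, Finset.mem_union, Sequent.mem_diamonds] at h
    obtain h | h := h
    · exact ⟨[], p, Θ, rfl, h⟩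
    · obtain ⟨q, r, Ξ, rfl, hA⟩ := ih h
      exact ⟨Θ :: q, r, Ξ, rfl, hA⟩

/-! ### Derived rules -/

namespace DerivWith

variable {P : Formula → Prop} {p : Zipper} {Γ Δ : Sequent} {A B : Formula}

theorem mono {Q : Formula → Prop} (hPQ : ∀ A, P A → Q A) (h : DerivWith P Γ) :
    DerivWith Q Γ := by
  induction h with
  | id c a => exact .id c a
  | and _ _ ihA ihB => exact .and ihA ihB
  | or _ ih => exact .or ih
  | box _ ih => exact .box ih
  | dia c d hd _ ih => exact .dia c d hd ih
  | cut hA _ _ ihA ihB => exact .cut (hPQ _ hA) ihA ihB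
  | exch hequiv _ ih => exact .exch hequiv ih

theorem plug_perm (h : Γ.Perm Δ) (hΓ : DerivWith P (p.plug Γ)) : DerivWith P (p.plug Δ) :=
  .exch ((SeqEquiv.of_perm h).plug p) hΓ

theorem fill_hole_under_iff :
    DerivWith P (((Ctx.hole Γ).under p).fill Δ) ↔ DerivWith P (p.plug (Δ ++ Γ)) := by
  rw [Ctx.fill_under]
  exact ⟨plug_perm List.perm_append_comm, plug_perm List.perm_append_comm⟩

theorem plug_id (a : ℕ) : DerivWith P (p.plug (.fml (.pos a) :: .fml (.neg a) :: Γ)) :=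
  fill_hole_under_iff.1 (.id _ a)

theorem plug_and (hA : DerivWith P (p.plug (.fml A :: Γ)))
    (hB : DerivWith P (p.plug (.fml B :: Γ))) : DerivWith P (p.plug (.fml (.and A B) :: Γ)) :=
  fill_hole_under_iff.1 <|
    .and (fill_hole_under_iff (Δ := [_]).2 hA) (fill_hole_under_iff (Δ := [_]).2 hB)

theorem plug_or (h : DerivWith P (p.plug (.fml A :: .fml B :: Γ))) :
    DerivWith P (p.plug (.fml (.or A B) :: Γ)) :=
  fill_hole_under_iff.1 <| .or (fill_hole_under_iff (Δ := [_, _]).2 h)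

theorem plug_box (h : DerivWith P (p.plug (.nest [.fml (.dia A.negate), .fml A] :: Γ))) :
    DerivWith P (p.plug (.fml (.box A) :: Γ)) :=
  fill_hole_under_iff.1 <| .box (fill_hole_under_iff (Δ := [_]).2 h)

theorem plug_of_mem_diamonds (hA : A ∈ p.diamonds) (h : DerivWith P (p.plug (.fml A :: Γ))) :
    DerivWith P (p.plug Γ) := by
  obtain ⟨q, r, Θ, rfl, hΘ⟩ := Zipper.exists_eq_append_of_mem_diamonds hA
  obtain ⟨Ξ, hΞ⟩ := Sequent.exists_perm_cons hΘ
  have plug_eq (Δ : Sequent) : Zipper.plug (q ++ Θ :: r) Δ = r.plug (.nest (q.plug Δ) :: Θ) := by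
    simp only [Zipper.plug, List.foldl_append, List.foldl_cons]
  have hperm (Δ : Sequent) : List.Perm (.nest (q.plug Δ) :: Θ)
      (.nest (q.plug Δ) :: Ξ ++ [.fml (.dia A)]) :=
    .cons _ (hΞ.trans (List.perm_append_singleton _ _).symm)
  have hdia := DerivWith.dia (P := P) (A := A) ((Ctx.hole []).under r)
    (.nest Ξ ((Ctx.hole Γ).under q)) (Nat.succ_pos _)
  simp only [Ctx.fill_under, Ctx.fill, List.nil_append, List.append_nil] at hdia
  replace h := plug_perm (List.perm_append_singleton _ Γ).symm h
  rw [plug_eq] at h ⊢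
  exact plug_perm (hperm Γ).symm (hdia (plug_perm (hperm _) h))

theorem plug_of_forall_mem_diamonds (l : List Formula) (hl : ∀ A ∈ l, A ∈ p.diamonds)
    (h : DerivWith P (p.plug (l.map .fml ++ Γ))) : DerivWith P (p.plug Γ) := by
  induction l with
  | nil => exact h
  | cons A l ih =>
    rw [List.forall_mem_cons] at hl
    exact ih hl.2 (plug_of_mem_diamonds hl.1 h)

theorem plug_and_negate (hA : ∀ Γ, DerivWith P (p.plug (.fml A :: .fml A.negate :: Γ)))
    (hB : ∀ Γ, DerivWith P (p.plug (.fml B :: .fml B.negate :: Γ))) :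
    DerivWith P (p.plug (.fml (.and A B) :: .fml (.or A.negate B.negate) :: Γ)) := by
  refine plug_and (plug_perm (.swap _ _ _) (plug_or ?_)) (plug_perm (.swap _ _ _) (plug_or ?_))
  · exact plug_perm (List.perm_middle (l₁ := [_, _])).symm (hA (.fml B.negate :: Γ))
  · exact plug_perm ((List.reverse_perm [_, _, _]).append_right Γ) (hB (.fml A.negate :: Γ))

theorem plug_dia_negate_of_mem_diamonds (hmem : A.negate ∈ p.diamonds)
    (h : DerivWith P (p.plug [.fml A, .fml A.negate, .fml (.dia A.negate)])) :
    DerivWith P (p.plug [.fml (.dia A.negate), .fml A]) :=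
  plug_of_mem_diamonds hmem (plug_perm (List.perm_append_singleton _ [_, _]).symm h)

theorem plug_box_negate
    (hA : ∀ (p : Zipper) Γ, DerivWith P (p.plug (.fml A :: .fml A.negate :: Γ))) :
    DerivWith P (p.plug (.fml (.box A) :: .fml (.dia A.negate) :: Γ)) := by
  refine plug_box (plug_dia_negate_of_mem_diamonds (p := (.fml (.dia A.negate) :: Γ) :: p) ?_
    (hA _ _))
  simp [Zipper.diamonds_cons, Sequent.mem_diamonds]

theorem plug_negate (A : Formula) (p : Zipper) (Γ : Sequent) :
    DerivWith P (p.plug (.fml A :: .fml A.negate :: Γ)) := by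
  have dual {A : Formula} {p : Zipper} {Γ : Sequent}
      (h : DerivWith P (p.plug (.fml A :: .fml A.negate :: Γ))) :
      DerivWith P (p.plug (.fml A.negate :: .fml A.negate.negate :: Γ)) := by
    rw [A.negate_negate]
    exact plug_perm (.swap _ _ _) h
  induction A generalizing p Γ with
  | pos a => exact plug_id a
  | neg a => exact plug_perm (.swap _ _ _) (plug_id a)
  | and A B ihA ihB => exact plug_and_negate (ihA p) (ihB p)
  | or A B ihA ihB =>
    simpa only [Formula.negate, Formula.negate_negate] using
      dual (plug_and_negate (Γ := Γ) (fun Γ => dual (ihA p Γ)) fun Γ => dual (ihB p Γ))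
  | box A ih => exact plug_box_negate ih
  | dia A ih =>
    simpa only [Formula.negate, Formula.negate_negate] using
      dual (plug_box_negate (p := p) (Γ := Γ) fun p Γ => dual (ih p Γ))

end DerivWith

/-! ### Decomposition and children of a sequent -/

mutual

/-- The formulas occurring anywhere in a sequent element. -/
def SeqElem.formulas : SeqElem → Finset Formula
  | .fml A => {A}
  | .nest Γ => Sequent.formulas Γ

/-- The formulas occurring anywhere in a sequent, brackets included. -/
def Sequent.formulas : List SeqElem → Finset Formula
  | [] => ∅
  | e :: Γ => e.formulas ∪ Sequent.formulas Γ

end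

namespace Sequent

theorem formulas_subset_iff {Γ : Sequent} {S : Finset Formula} :
    formulas Γ ⊆ S ↔ ∀ e ∈ Γ, e.formulas ⊆ S := by
  induction Γ <;> simp_all [formulas, Finset.union_subset_iff]

/-- `Decomposes Γ Δ`: `Δ` results from `Γ` by repeatedly replacing a conjunction at the root by
one of its conjuncts and a disjunction by both its disjuncts, as long as there are any. -/
inductive Decomposes : Sequent → Sequent → Prop where
  | nil : Decomposes [] []
  | cons {e : SeqElem} {Γ Δ : Sequent} (hand : ∀ A B, e ≠ .fml (.and A B))
      (hor : ∀ A B, e ≠ .fml (.or A B)) : Decomposes Γ Δ → Decomposes (e :: Γ) (e :: Δ)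
  | and_left {A B : Formula} {Γ Δ : Sequent} :
      Decomposes (.fml A :: Γ) Δ → Decomposes (.fml (.and A B) :: Γ) Δ
  | and_right {A B : Formula} {Γ Δ : Sequent} :
      Decomposes (.fml B :: Γ) Δ → Decomposes (.fml (.and A B) :: Γ) Δ
  | or {A B : Formula} {Γ Δ : Sequent} :
      Decomposes (.fml A :: .fml B :: Γ) Δ → Decomposes (.fml (.or A B) :: Γ) Δ

namespace Decomposes

variable {Γ Δ : Sequent}

theorem and_notMem (h : Decomposes Γ Δ) (A B : Formula) : .fml (.and A B) ∉ Δ := by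
  induction h with
  | nil => simp
  | cons hand _ _ ih => simp [(hand A B).symm, ih]
  | and_left _ ih | and_right _ ih | or _ ih => exact ih

theorem or_notMem (h : Decomposes Γ Δ) (A B : Formula) : .fml (.or A B) ∉ Δ := by
  induction h with
  | nil => simp
  | cons _ hor _ ih => simp [(hor A B).symm, ih]
  | and_left _ ih | and_right _ ih | or _ ih => exact ih

theorem nest_mem (h : Decomposes Γ Δ) {Θ : Sequent} (hΘ : .nest Θ ∈ Δ) : .nest Θ ∈ Γ := by
  induction h with
  | nil => exact hΘ
  | cons _ _ _ ih => exact List.mem_cons.2 ((List.mem_cons.1 hΘ).imp_right ih)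
  | and_left _ ih | and_right _ ih | or _ ih => simpa using ih hΘ

theorem diamonds_subset (h : Decomposes Γ Δ) : diamonds Γ ⊆ diamonds Δ := by
  simp only [Finset.subset_iff, mem_diamonds]
  intro A hA
  induction h with
  | nil => exact hA
  | cons _ _ _ ih => exact List.mem_cons.2 ((List.mem_cons.1 hA).imp_right ih)
  | and_left _ ih | and_right _ ih | or _ ih => simp_all

theorem formulas_subset (h : Decomposes Γ Δ) {S : Finset Formula} (hS : SubformulaClosed S)
    (hΓ : formulas Γ ⊆ S) : formulas Δ ⊆ S := by
  induction h with
  | nil => exact hΓ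
  | cons _ _ _ ih =>
    exact Finset.union_subset (Finset.union_subset_left hΓ) (ih (Finset.union_subset_right hΓ))
  | and_left _ ih | and_right _ ih | or _ ih =>
    refine ih ?_
    simp only [formulas, SeqElem.formulas, Finset.union_subset_iff,
      Finset.singleton_subset_iff] at hΓ ⊢
    have := hS.subformulas_subset hΓ.1
    grind [Formula.subformulas, Formula.self_mem_subformulas]

theorem refutes (h : Decomposes Γ Δ) {t : KripkeTree} (ht : t.Refutes Δ) : t.Refutes Γ := by
  induction h <;> simp_all [KripkeTree.Refutes, KripkeTree.RefutesElem, KripkeTree.Forces]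

end Decomposes

/-- The sequents required at the children of a node: the bracketed ones, and the premises of the
box rule. -/
def Child (Γ Δ : Sequent) : Prop :=
  .nest Δ ∈ Γ ∨ ∃ B, .fml (.box B) ∈ Γ ∧ Δ = [.fml (.dia B.negate), .fml B]

theorem Child.formulas_subset {Γ Δ : Sequent} (h : Child Γ Δ) {S : Finset Formula}
    (hS : SubformulaClosed S) (hΓ : formulas Γ ⊆ S) : formulas Δ ⊆ S := by
  rw [formulas_subset_iff] at hΓ
  obtain h | ⟨B, hB, rfl⟩ := h
  · exact hΓ _ h
  · have hB : .box B ∈ S := Finset.singleton_subset_iff.1 (hΓ _ hB)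
    have hBS : B ∈ S := hS.mem_of_box_mem hB
    have hdia : .dia B.negate ∈ S := hS.negate_mem hB
    simp [formulas, SeqElem.formulas, Finset.insert_subset_iff, hBS, hdia]

theorem mem_of_mem_diamonds {Γ : Sequent} {S : Finset Formula} (hS : SubformulaClosed S)
    (hΓ : formulas Γ ⊆ S) {A : Formula} (hA : A ∈ diamonds Γ) : A ∈ S := by
  refine hS.mem_of_dia_mem ?_
  exact Finset.singleton_subset_iff.1 (formulas_subset_iff.1 hΓ _ (mem_diamonds.1 hA))

end Sequent

section

open Sequent

namespace DerivWith

variable {P : Formula → Prop} {p : Zipper}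

theorem plug_cons_of_forall_decomposes {e : SeqElem} {Γ : Sequent}
    (hand : ∀ A B, e ≠ .fml (.and A B)) (hor : ∀ A B, e ≠ .fml (.or A B))
    (hΓ : ∀ Θ, (∀ Δ, Decomposes Γ Δ → DerivWith P (p.plug (Δ ++ Θ))) →
      DerivWith P (p.plug (Γ ++ Θ))) (Θ : Sequent)
    (h : ∀ Δ, Decomposes (e :: Γ) Δ → DerivWith P (p.plug (Δ ++ Θ))) :
    DerivWith P (p.plug (e :: Γ ++ Θ)) :=
  plug_perm List.perm_middle <| hΓ (e :: Θ) fun Δ hΔ =>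
    plug_perm List.perm_middle.symm (h (e :: Δ) (.cons hand hor hΔ))

theorem plug_fml_cons_of_forall_decomposes (A : Formula) {Γ : Sequent}
    (hΓ : ∀ Θ, (∀ Δ, Decomposes Γ Δ → DerivWith P (p.plug (Δ ++ Θ))) →
      DerivWith P (p.plug (Γ ++ Θ))) (Θ : Sequent)
    (h : ∀ Δ, Decomposes (.fml A :: Γ) Δ → DerivWith P (p.plug (Δ ++ Θ))) :
    DerivWith P (p.plug (.fml A :: Γ ++ Θ)) := by
  induction A generalizing Γ Θ with
  | and A B ihA ihB =>
    exact plug_and (ihA hΓ Θ fun Δ hΔ => h Δ (.and_left hΔ))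
      (ihB hΓ Θ fun Δ hΔ => h Δ (.and_right hΔ))
  | or A B ihA ihB => exact plug_or (ihA (ihB hΓ) Θ fun Δ hΔ => h Δ (.or hΔ))
  | pos _ | neg _ | box _ _ | dia _ _ =>
    exact plug_cons_of_forall_decomposes (by simp) (by simp) hΓ Θ h

theorem plug_of_forall_decomposes {Γ : Sequent}
    (h : ∀ Δ, Decomposes Γ Δ → DerivWith P (p.plug Δ)) : DerivWith P (p.plug Γ) := by
  suffices ∀ Θ, (∀ Δ, Decomposes Γ Δ → DerivWith P (p.plug (Δ ++ Θ))) →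
      DerivWith P (p.plug (Γ ++ Θ)) by
    simpa using this [] (by simpa using h)
  clear h
  induction Γ with
  | nil => exact fun Θ h => h [] .nil
  | cons e Γ ih =>
    cases e with
    | fml A => exact plug_fml_cons_of_forall_decomposes A ih
    | nest Δ => exact plug_cons_of_forall_decomposes (by simp) (by simp) ih

theorem plug_of_pos_mem_of_neg_mem {Γ : Sequent} {a : ℕ} (hpos : .fml (.pos a) ∈ Γ)
    (hneg : .fml (.neg a) ∈ Γ) : DerivWith P (p.plug Γ) := by
  obtain ⟨Θ, hΘ⟩ := exists_perm_cons hpos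
  obtain ⟨Ξ, hΞ⟩ := exists_perm_cons (by simpa using hΘ.subset hneg : .fml (.neg a) ∈ Θ)
  exact plug_perm (hΘ.trans (.cons _ hΞ)).symm (plug_id a)

theorem exists_plug_cons_of_child {Γ Δ : Sequent} (hΔ : Child Γ Δ) :
    ∃ Θ, diamonds Θ = diamonds Γ ∧
      (DerivWith P (Zipper.plug (Θ :: p) Δ) → DerivWith P (p.plug Γ)) := by
  obtain hΔ | ⟨B, hB, rfl⟩ := hΔ
  · obtain ⟨Θ, hΘ⟩ := exists_perm_cons hΔ
    refine ⟨Θ, ?_, plug_perm hΘ.symm⟩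
    ext A
    simp [mem_diamonds, hΘ.mem_iff]
  · obtain ⟨Θ, hΘ⟩ := exists_perm_cons hB
    refine ⟨Θ, ?_, fun h => plug_perm hΘ.symm (plug_box h)⟩
    ext A
    simp [mem_diamonds, hΘ.mem_iff]

end DerivWith

/-! ### Completeness -/

/-- All formulas in `T` are false at every point of the tree. -/
def KripkeTree.Avoids (t : KripkeTree) (T : Finset Formula) : Prop :=
  ∀ A ∈ T, ¬ t.Forces A ∧ ¬ t.Forces (.dia A)

open KripkeTree in
theorem exists_refutes_of_forall_child {Γ : Sequent} {T : Finset Formula}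
    (hand : ∀ A B, .fml (.and A B) ∉ Γ) (hor : ∀ A B, .fml (.or A B) ∉ Γ)
    (hlit : ∀ a, .fml (.pos a) ∈ Γ → .fml (.neg a) ∉ Γ)
    (hchild : ∀ Δ, Child Γ Δ → ∃ t : KripkeTree, t.Refutes Δ ∧ t.Avoids (diamonds Γ ∪ T)) :
    ∃ t : KripkeTree, t.Refutes Γ ∧ ∀ A ∈ T, ¬ t.Forces (.dia A) := by
  choose f hf hT using hchild
  let g (i : {Δ // Child Γ Δ}) : KripkeTree := f i.1 i.2
  let t : KripkeTree := .node (fun a => .fml (.neg a) ∈ Γ) g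
  have hdia (A : Formula) (hA : A ∈ diamonds Γ ∪ T) : ¬ t.Forces (.dia A) := by
    rw [forces_dia_node]
    rintro ⟨i, hi | hi⟩
    · exact (hT i.1 i.2 A hA).1 hi
    · exact (hT i.1 i.2 A hA).2 hi
  have hbelow (Δ : Sequent) (hΔ : Child Γ Δ) : Below (f Δ hΔ) t :=
    .single (.mk _ g ⟨Δ, hΔ⟩)
  refine ⟨t, refutes_iff_forall_mem.2 fun e he => ?_,
    fun A hA => hdia A (Finset.mem_union_right _ hA)⟩
  match e with
  | .nest Δ => exact ⟨_, hbelow Δ (.inl he), hf Δ _⟩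
  | .fml (.pos a) => exact hlit a he
  | .fml (.neg a) => exact not_not_intro he
  | .fml (.and A B) => exact absurd he (hand A B)
  | .fml (.or A B) => exact absurd he (hor A B)
  | .fml (.box B) =>
    have hB : Child Γ [.fml (.dia B.negate), .fml B] := .inr ⟨B, he, rfl⟩
    exact fun hbox => (hf _ hB).2.1 (hbox _ (hbelow _ hB))
  | .fml (.dia A) => exact hdia A (Finset.mem_union_left _ (mem_diamonds.2 he))

/-- The formulas of `S` whose diamonds occur neither above the position `p` nor at the root of the
sequent `Γ` placed there. -/
def unavailable (S : Finset Formula) (p : Zipper) (Γ : Sequent) : Finset Formula :=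
  S \ (diamonds Γ ∪ p.diamonds)

theorem unavailable_cons_subset {S : Finset Formula} {p : Zipper} {Γ Γ' Δ Θ : Sequent}
    (hΓ : diamonds Γ ⊆ diamonds Γ') (hΘ : diamonds Θ = diamonds Γ') :
    unavailable S (Θ :: p) Δ ⊆ unavailable S p Γ := by
  rw [unavailable, unavailable, Zipper.diamonds_cons, hΘ]
  grind

theorem unavailable_cons_ssubset {S : Finset Formula} {p : Zipper} {Γ Γ' Δ Θ : Sequent}
    (hΓ : diamonds Γ ⊆ diamonds Γ') (hΘ : diamonds Θ = diamonds Γ') {A : Formula}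
    (hAS : A ∈ S) (hA : A ∉ Zipper.diamonds (Θ :: p)) (hAΔ : A ∈ diamonds Δ) :
    unavailable S (Θ :: p) Δ ⊂ unavailable S p Γ := by
  rw [Finset.ssubset_iff_of_subset (unavailable_cons_subset hΓ hΘ)]
  rw [Zipper.diamonds_cons, hΘ] at hA
  refine ⟨A, ?_, ?_⟩ <;> grind [unavailable]

theorem prodLex_of_child {S : Finset Formula} (hS : SubformulaClosed S) {p : Zipper}
    {l : List Formula} {Γ Γ' Δ Θ : Sequent} (hdec : Decomposes (l.map .fml ++ Γ) Γ')
    (hΓ' : formulas Γ' ⊆ S) (hΘ : diamonds Θ = diamonds Γ') (hΔ : Child Γ' Δ)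
    (hder : ¬ Deriv (Zipper.plug (Θ :: p) Δ)) :
    Prod.Lex (· < ·) (· < ·) ((unavailable S (Θ :: p) Δ).card, sizeOf Δ)
      ((unavailable S p Γ).card, sizeOf Γ) := by
  have hΓ : diamonds Γ ⊆ diamonds Γ' := fun A hA =>
    hdec.diamonds_subset (mem_diamonds.2 (List.mem_append_right _ (mem_diamonds.1 hA)))
  obtain hΔ | ⟨B, hB, rfl⟩ := hΔ
  · have hsize : sizeOf Δ < sizeOf Γ := by
      have hmem : .nest Δ ∈ Γ := by simpa using hdec.nest_mem hΔ
      have := List.sizeOf_lt_of_mem hmem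
      rw [SeqElem.nest.sizeOf_spec] at this
      lia
    exact .right' _ (Finset.card_le_card (unavailable_cons_subset hΓ hΘ)) hsize
  · have hbox : .box B ∈ S := Finset.singleton_subset_iff.1 (formulas_subset_iff.1 hΓ' _ hB)
    have hBS : B.negate ∈ S := hS.negate_mem (hS.mem_of_box_mem hbox)
    have hnew : B.negate ∉ Zipper.diamonds (Θ :: p) := fun hmem =>
      hder (.plug_dia_negate_of_mem_diamonds hmem (.plug_negate B _ _))
    exact .left _ _ (Finset.card_lt_card
      (unavailable_cons_ssubset hΓ hΘ hBS hnew (by simp [mem_diamonds])))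

theorem exists_decomposes_not_deriv_plug {p : Zipper} {Γ : Sequent} (h : ¬ Deriv (p.plug Γ)) :
    ∃ Γ', Decomposes (p.diamonds.toList.map .fml ++ Γ) Γ' ∧ ¬ Deriv (p.plug Γ') := by
  by_contra! hall
  exact h (.plug_of_forall_mem_diamonds _ (by simp) (.plug_of_forall_decomposes hall))

theorem exists_refutes_of_not_deriv_plug {S : Finset Formula} (hS : SubformulaClosed S)
    (p : Zipper) (Γ : Sequent) (hp : p.diamonds ⊆ S) (hΓ : formulas Γ ⊆ S)
    (h : ¬ Deriv (p.plug Γ)) : ∃ t : KripkeTree, t.Refutes Γ ∧ t.Avoids p.diamonds := by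
  obtain ⟨Γ', hdec, hΓ'⟩ := exists_decomposes_not_deriv_plug h
  have hΓ'S : formulas Γ' ⊆ S := by
    refine hdec.formulas_subset hS (formulas_subset_iff.2 (List.forall_mem_append.2 ⟨?_, ?_⟩))
    · simpa [SeqElem.formulas, Finset.subset_iff] using hp
    · exact formulas_subset_iff.1 hΓ
  have hchild (Δ : Sequent) (hΔ : Child Γ' Δ) :
      ∃ t : KripkeTree, t.Refutes Δ ∧ t.Avoids (diamonds Γ' ∪ p.diamonds) := by
    obtain ⟨Θ, hΘ, hder⟩ := DerivWith.exists_plug_cons_of_child (p := p) hΔ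
    rw [← hΘ, ← Zipper.diamonds_cons]
    refine exists_refutes_of_not_deriv_plug hS _ Δ ?_ (hΔ.formulas_subset hS hΓ'S) (mt hder hΓ')
    rw [Zipper.diamonds_cons, hΘ]
    exact Finset.union_subset (fun A => mem_of_mem_diamonds hS hΓ'S) hp
  obtain ⟨t, ht, htp⟩ := exists_refutes_of_forall_child hdec.and_notMem hdec.or_notMem
    (fun a hpos hneg => hΓ' (.plug_of_pos_mem_of_neg_mem hpos hneg)) hchild
  obtain ⟨hfml, htΓ⟩ := KripkeTree.refutes_append.1 (hdec.refutes ht)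
  refine ⟨t, htΓ, fun A hA => ⟨?_, htp A hA⟩⟩
  exact KripkeTree.refutes_iff_forall_mem.1 hfml (.fml A) (by simpa using hA)
termination_by ((unavailable S p Γ).card, sizeOf Γ)
decreasing_by exact prodLex_of_child hS hdec hΓ'S hΘ hΔ (mt hder hΓ')

theorem deriv_of_forall_not_refutes {Γ : Sequent} (h : ∀ t : KripkeTree, ¬ t.Refutes Γ) :
    Deriv Γ := by
  by_contra hΓ
  obtain ⟨t, ht, -⟩ := exists_refutes_of_not_deriv_plug
    (subformulaClosed_subformulaClosure (formulas Γ)) [] Γ (Finset.empty_subset _)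
    (subset_subformulaClosure _) hΓ
  exact h t ht

end

theorem diagonal_formula_elimination_general {P : Formula → Prop} {c : Ctx} {A : Formula}
    (h : DerivWith P (c.fill [.nest [.fml (.dia A.negate), .fml A]])) :
    Deriv (c.fill [.nest [.fml A]]) :=
  deriv_of_forall_not_refutes fun t ht =>
    h.not_refutes t (ht.fill_mono fun _ => KripkeTree.refutes_nest_dia_negate)

/-- diagonal-formula elimination. -/
theorem diagonal_formula_elimination (c : Ctx) (A : Formula)
    (h : Deriv (c.fill [.nest [.fml (.dia A.negate), .fml A]])) :
    DerivWith (· = A) (c.fill [.nest [.fml A]]) := by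
  exact (diagonal_formula_elimination_general h).mono fun _ => False.elim
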